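/- arXiv:0705.2078 — 2 statements merged into one kernel-verified Lean document; each statement's English description precedes it below -/
import Mathlib

section
/- Let g ≥ 2. The images in B³ of the square-free monomials of degree at most 3 in the 2g generators Ā₁,…,Ā_g,B̄₁,…,B̄_g (including the empty product 1) form a basis of B³ as a ℤ/2ℤ-vector space. In particular dim_{ℤ/2ℤ} B³ = 1 + 2g + C(2g,2) + C(2g,3), where C(n,k) is the binomial coefficient. -/
open MvPolynomial

/-- `V = (ℤ/2ℤ)^{2g}`, with standard basis `A_i = Pi.single (Sum.inl i) 1` and
`B_i = Pi.single (Sum.inr i) 1`. -/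
abbrev VV (g : ℕ) := Fin g ⊕ Fin g → ZMod 2

/-- The mod 2 intersection (symplectic) form on `V`, with `A_i · B_i = 1` and all other
pairings of basis vectors zero. -/
def symF {g : ℕ} (x y : VV g) : ZMod 2 :=
  ∑ i : Fin g, (x (Sum.inl i) * y (Sum.inr i) + x (Sum.inr i) * y (Sum.inl i))

/-- The ideal of relations defining the algebra of boolean polynomials:
`(x+y)‾ = x̄ + ȳ + (x·y)·1` and `x̄² = x̄`. -/
noncomputable def boolRel (g : ℕ) : Ideal (MvPolynomial (VV g) (ZMod 2)) :=
  Ideal.span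
    ({q | ∃ x y : VV g, q = X (x + y) - X x - X y - C (symF x y)} ∪
     {q | ∃ x : VV g, q = X x ^ 2 - X x})

/-- The algebra of boolean polynomials on `V`. -/
abbrev BoolPoly (g : ℕ) := MvPolynomial (VV g) (ZMod 2) ⧸ boolRel g

/-- The generator `x̄` of the boolean algebra, for `x ∈ V`. -/
noncomputable def bgen {g : ℕ} (x : VV g) : BoolPoly g := Ideal.Quotient.mk (boolRel g) (X x)

/-- `B^n`: the subspace of boolean polynomials of degree at most `n`, spanned by
products of at most `n` generators. -/
noncomputable def BoolDeg (g n : ℕ) : Submodule (ZMod 2) (BoolPoly g) :=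
  Submodule.span (ZMod 2) {b | ∃ l : List (VV g), l.length ≤ n ∧ b = (l.map bgen).prod}

/-- A linear automorphism of `V` preserving the symplectic form induces a ring
endomorphism of the boolean algebra, `x̄ ↦ (f x)‾`. -/
noncomputable def actB {g : ℕ} (f : VV g ≃ₗ[ZMod 2] VV g)
    (hf : ∀ x y : VV g, symF (f x) (f y) = symF x y) : BoolPoly g →+* BoolPoly g :=
  Ideal.Quotient.lift (boolRel g)
    ((Ideal.Quotient.mk (boolRel g)).comp (rename (⇑f)).toRingHom)
    (by
      have hle : boolRel g ≤ Ideal.comap (rename (⇑f)).toRingHom (boolRel g) := by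
        rw [boolRel, Ideal.span_le]
        rintro q (⟨x, y, rfl⟩ | ⟨x, rfl⟩)
        · have : (rename (⇑f)) (X (x + y) - X x - X y - C (symF x y)) =
              X (f x + f y) - X (f x) - X (f y) - C (symF (f x) (f y)) := by
            simp [map_add, hf x y]
          refine Ideal.mem_comap.mpr ?_
          simp only [AlgHom.toRingHom_eq_coe, RingHom.coe_coe, this]
          exact Ideal.subset_span (Or.inl ⟨f x, f y, rfl⟩)
        · refine Ideal.mem_comap.mpr ?_
          have : (rename (⇑f)) (X x ^ 2 - X x) =
              (X (f x) ^ 2 - X (f x) : MvPolynomial (VV g) (ZMod 2)) := by simp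
          simp only [AlgHom.toRingHom_eq_coe, RingHom.coe_coe, this]
          exact Ideal.subset_span (Or.inr ⟨f x, rfl⟩)
      intro a ha
      rw [RingHom.comp_apply, Ideal.Quotient.eq_zero_iff_mem]
      exact Ideal.mem_comap.mp (hle ha))

/-!
A boolean polynomial defines a function on the set of quadratic forms on `V` refining the
intersection form: `x̄` sends a form to its value at `x`. Such a form is determined by its values on
the standard basis, which are arbitrary. Evaluating the square-free monomial indexed by a set `s`
of basis vectors at the form whose values are the indicator of a set `t` gives `1` if `s ⊆ t` and
`0` otherwise, a unitriangular matrix for the inclusion order; hence the monomials are independent.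
They span because every `x̄` is a constant plus a combination of the `Āᵢ` and `B̄ᵢ`, which are
idempotent.
-/

section General

variable {ι R M : Type*}

theorem linearIndependent_of_unitriangular [PartialOrder ι] [Ring R] [AddCommGroup M] [Module R M]
    {v : ι → M} (φ : ι → M →ₗ[R] R) (diag : ∀ t, φ t (v t) = 1)
    (off_diag : ∀ s t, ¬ s ≤ t → φ t (v s) = 0) : LinearIndependent R v := by
  classical
  rw [linearIndependent_iff']
  intro S c hc
  by_contra! h
  obtain ⟨t, ht⟩ := {s ∈ S | c s ≠ 0}.exists_minimal (by simpa [Finset.Nonempty] using h)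
  obtain ⟨htS, hct⟩ := Finset.mem_filter.mp ht.prop
  have vanish : ∀ s ∈ S, s ≠ t → c s * φ t (v s) = 0 := by
    intro s hs hst
    by_cases hle : s ≤ t
    · have hcs : c s = 0 := by
        by_contra hcs
        exact hst (ht.eq_of_le (Finset.mem_filter.mpr ⟨hs, hcs⟩) hle)
      rw [hcs, zero_mul]
    · rw [off_diag s t hle, mul_zero]
  apply hct
  calc c t = ∑ s ∈ S, c s * φ t (v s) := by
        rw [Finset.sum_eq_single_of_mem t htS vanish, diag, mul_one]
    _ = φ t (∑ s ∈ S, c s • v s) := by simp only [map_sum, map_smul, smul_eq_mul]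
    _ = 0 := by rw [hc, map_zero]

theorem mul_prod_eq_prod_insert_of_isIdempotentElem [DecidableEq ι] [CommMonoid M] {e : ι → M}
    {k : ι} (he : IsIdempotentElem (e k)) (s : Finset ι) :
    e k * ∏ i ∈ s, e i = ∏ i ∈ insert k s, e i := by
  by_cases hk : k ∈ s
  · rw [Finset.insert_eq_of_mem hk, ← Finset.mul_prod_erase s e hk, ← mul_assoc, he.eq]
  · rw [Finset.prod_insert hk]

theorem one_sup_span_range_pow_le_span_prod [CommSemiring R] {A : Type*} [CommSemiring A]
    [Algebra R A] {e : ι → A} (he : ∀ k, IsIdempotentElem (e k)) (n : ℕ) :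
    (1 ⊔ Submodule.span R (Set.range e)) ^ n ≤
      Submodule.span R
        (Set.range fun s : {s : Finset ι // s.card ≤ n} => ∏ k ∈ s.1, e k) := by
  classical
  induction n with
  | zero =>
    rw [pow_zero, Submodule.one_le]
    exact Submodule.subset_span ⟨⟨∅, le_rfl⟩, Finset.prod_empty⟩
  | succ n ih =>
    rw [pow_succ']
    refine (mul_le_mul_right ih _).trans ?_
    rw [Submodule.sup_mul, one_mul, Submodule.span_mul_span, sup_le_iff]
    constructor
    · apply Submodule.span_mono
      rintro _ ⟨s, rfl⟩
      exact ⟨⟨s.1, s.2.trans n.le_succ⟩, rfl⟩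
    · apply Submodule.span_mono
      rintro _ ⟨_, ⟨k, rfl⟩, _, ⟨s, rfl⟩, rfl⟩
      exact ⟨⟨insert k s.1, (Finset.card_insert_le k s.1).trans (Nat.succ_le_succ s.2)⟩,
        (mul_prod_eq_prod_insert_of_isIdempotentElem (he k) s.1).symm⟩

theorem list_prod_mem_pow_of_length_le [CommSemiring R] {A : Type*} [Semiring A] [Algebra R A]
    {N : Submodule R A} (one_le : 1 ≤ N) {l : List A} (hl : ∀ a ∈ l, a ∈ N) {n : ℕ}
    (hn : l.length ≤ n) : l.prod ∈ N ^ n := by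
  have prod_mem : (l.map id).prod ∈ N ^ (l.map fun _ => 1).sum :=
    SetLike.list_prod_map_mem_graded (A := (N ^ ·)) l _ _ fun a ha =>
      (pow_one N).symm ▸ hl a ha
  rw [List.map_id, List.map_const', List.sum_replicate, smul_eq_mul, mul_one] at prod_mem
  exact pow_le_pow_right' one_le hn prod_mem

theorem card_finset_card_le (α : Type*) [Fintype α] (n : ℕ) :
    Fintype.card {s : Finset α // s.card ≤ n} =
      ∑ i ∈ Finset.range (n + 1), (Fintype.card α).choose i := by
  rw [Fintype.card_subtype, Finset.card_eq_sum_card_fiberwise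
    (f := Finset.card) (t := Finset.range (n + 1)) (by intro s; simp)]
  refine Finset.sum_congr rfl fun i hi => ?_
  rw [← Finset.card_univ, ← Finset.card_powersetCard]
  congr 1
  ext s
  simp only [Finset.mem_filter, Finset.mem_univ, Finset.mem_powersetCard, Finset.subset_univ,
    true_and, and_iff_right_iff_imp]
  rintro rfl
  exact Finset.mem_range_succ_iff.mp hi

end General

section Generators

variable {g : ℕ}

theorem bgen_add (x y : VV g) :
    bgen (x + y) = bgen x + bgen y + algebraMap (ZMod 2) (BoolPoly g) (symF x y) := by
  have rel : X (x + y) - X x - X y - C (symF x y) ∈ boolRel g :=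
    Ideal.subset_span (Or.inl ⟨x, y, rfl⟩)
  rw [sub_sub, sub_sub, ← Ideal.Quotient.eq, map_add, map_add, ← add_assoc] at rel
  exact rel

theorem isIdempotentElem_bgen (x : VV g) : IsIdempotentElem (bgen x) := by
  have rel : X x ^ 2 - X x ∈ boolRel g := Ideal.subset_span (Or.inr ⟨x, rfl⟩)
  rwa [← Ideal.Quotient.eq, map_pow, sq] at rel

theorem bgen_zero : bgen (0 : VV g) = 0 := by
  simpa [symF] using bgen_add (0 : VV g) 0

theorem bgen_smul (a : ZMod 2) (x : VV g) : bgen (a • x) = a • bgen x := by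
  obtain rfl | rfl : a = 0 ∨ a = 1 := by decide +revert
  · rw [zero_smul, zero_smul, bgen_zero]
  · rw [one_smul, one_smul]

theorem bgen_mem_one_sup_span_single (x : VV g) :
    bgen x ∈ (1 ⊔ Submodule.span (ZMod 2)
      (Set.range fun k => bgen (Pi.single k 1)) : Submodule (ZMod 2) (BoolPoly g)) := by
  induction x using Pi.single_induction with
  | zero =>
    rw [bgen_zero]
    exact zero_mem _
  | add y z hy hz =>
    rw [bgen_add]
    exact add_mem (add_mem hy hz) (Submodule.mem_sup_left (Submodule.algebraMap_mem _))
  | single k a =>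
    rw [← mul_one a, ← smul_eq_mul, Pi.single_smul, bgen_smul]
    exact Submodule.mem_sup_right
      (Submodule.smul_mem _ _ (Submodule.subset_span (Set.mem_range_self k)))

theorem boolDeg_le_one_sup_span_single_pow (g n : ℕ) :
    BoolDeg g n ≤ (1 ⊔ Submodule.span (ZMod 2) (Set.range fun k => bgen (Pi.single k 1))) ^ n := by
  rw [BoolDeg, Submodule.span_le]
  rintro _ ⟨l, hl, rfl⟩
  refine list_prod_mem_pow_of_length_le le_sup_left ?_ ((List.length_map bgen).trans_le hl)
  exact List.forall_mem_map.mpr fun x _ => bgen_mem_one_sup_span_single x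

theorem span_prod_bgen_single_eq_boolDeg (g n : ℕ) :
    Submodule.span (ZMod 2)
      (Set.range (fun s : {s : Finset (Fin g ⊕ Fin g) // s.card ≤ n} =>
        ∏ k ∈ s.1, bgen (Pi.single k (1 : ZMod 2)))) = BoolDeg g n := by
  apply le_antisymm
  · apply Submodule.span_mono
    rintro _ ⟨⟨s, hs⟩, rfl⟩
    refine ⟨s.toList.map (Pi.single · 1), by simpa using hs, ?_⟩
    rw [List.map_map]
    exact (Finset.prod_map_toList s _).symm
  · exact (boolDeg_le_one_sup_span_single_pow g n).trans
      (one_sup_span_range_pow_le_span_prod (fun _ => isIdempotentElem_bgen _) n)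

end Generators

section Evaluation

variable {g : ℕ}

/-- The universal property of the algebra of boolean polynomials: a map from `V` to a commutative
`ℤ/2ℤ`-algebra that satisfies the defining relations extends to an algebra homomorphism. -/
noncomputable def BoolPoly.lift {A : Type*} [CommRing A] [Algebra (ZMod 2) A] (q : VV g → A)
    (hadd : ∀ x y, q (x + y) = q x + q y + algebraMap (ZMod 2) A (symF x y))
    (hidem : ∀ x, IsIdempotentElem (q x)) : BoolPoly g →ₐ[ZMod 2] A :=
  Ideal.Quotient.liftₐ (boolRel g) (aeval q) fun a ha => by
    have hle : boolRel g ≤ RingHom.ker (aeval q : MvPolynomial (VV g) (ZMod 2) →ₐ[ZMod 2] A) := by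
      rw [boolRel, Ideal.span_le]
      rintro _ (⟨x, y, rfl⟩ | ⟨x, rfl⟩)
      · simp [RingHom.mem_ker, hadd, sub_sub, add_assoc]
      · simp [RingHom.mem_ker, sq, (hidem x).eq]
    exact hle ha

theorem BoolPoly.lift_bgen {A : Type*} [CommRing A] [Algebra (ZMod 2) A] (q : VV g → A)
    (hadd : ∀ x y, q (x + y) = q x + q y + algebraMap (ZMod 2) A (symF x y))
    (hidem : ∀ x, IsIdempotentElem (q x)) (x : VV g) :
    BoolPoly.lift q hadd hidem (bgen x) = q x :=
  aeval_X q x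

/-- The quadratic form on `V` that refines the intersection form `symF` and takes the values `w`
on the standard basis. -/
def quadRefinement (w x : VV g) : ZMod 2 :=
  w ⬝ᵥ x + ∑ i : Fin g, x (Sum.inl i) * x (Sum.inr i)

theorem quadRefinement_add (w x y : VV g) :
    quadRefinement w (x + y) = quadRefinement w x + quadRefinement w y + symF x y := by
  have expand : ∑ i : Fin g, (x + y) (Sum.inl i) * (x + y) (Sum.inr i) =
      ∑ i, x (Sum.inl i) * x (Sum.inr i) + ∑ i, y (Sum.inl i) * y (Sum.inr i) + symF x y := by
    simp only [symF, ← Finset.sum_add_distrib, Pi.add_apply]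
    exact Finset.sum_congr rfl fun i _ => by ring
  rw [quadRefinement, quadRefinement, quadRefinement, expand, dotProduct_add]
  ring

theorem quadRefinement_single (w : VV g) (k : Fin g ⊕ Fin g) :
    quadRefinement w (Pi.single k 1) = w k := by
  have cross : ∀ i : Fin g, (Pi.single k 1 : VV g) (Sum.inl i) *
      (Pi.single k 1 : VV g) (Sum.inr i) = 0 := by
    intro i
    rcases k with k | k <;> simp [Pi.single_apply]
  simp only [quadRefinement, cross, Finset.sum_const_zero, add_zero, dotProduct_single_one]

/-- Evaluation of boolean polynomials at the quadratic form `quadRefinement w`, sending `x̄` to the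
value of that form at `x`. -/
noncomputable def evalQuadRefinement (w : VV g) : BoolPoly g →ₐ[ZMod 2] ZMod 2 :=
  BoolPoly.lift (quadRefinement w) (quadRefinement_add w)
    fun x => (sq _).symm.trans (ZMod.pow_card (quadRefinement w x))

theorem evalQuadRefinement_bgen_single (w : VV g) (k : Fin g ⊕ Fin g) :
    evalQuadRefinement w (bgen (Pi.single k 1)) = w k :=
  (BoolPoly.lift_bgen ..).trans (quadRefinement_single w k)

theorem evalQuadRefinement_indicator_prod (s t : Finset (Fin g ⊕ Fin g)) :
    evalQuadRefinement (fun k => if k ∈ t then 1 else 0)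
      (∏ k ∈ s, bgen (Pi.single k 1)) = if s ⊆ t then 1 else 0 := by
  simp only [map_prod, evalQuadRefinement_bgen_single, Finset.prod_ite_zero, Finset.prod_const_one,
    Finset.subset_iff]

theorem linearIndependent_prod_bgen_single (g : ℕ) :
    LinearIndependent (ZMod 2)
      (fun s : Finset (Fin g ⊕ Fin g) => ∏ k ∈ s, bgen (Pi.single k (1 : ZMod 2))) :=
  linearIndependent_of_unitriangular
    (fun t => (evalQuadRefinement fun k => if k ∈ t then 1 else 0).toLinearMap)
    (fun t => (evalQuadRefinement_indicator_prod t t).trans (if_pos subset_rfl))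
    (fun s t hst => (evalQuadRefinement_indicator_prod s t).trans (if_neg hst))

end Evaluation

theorem stmt17_general (g n : ℕ) :
    LinearIndependent (ZMod 2)
      (fun s : {s : Finset (Fin g ⊕ Fin g) // s.card ≤ n} =>
        ∏ k ∈ s.1, bgen (Pi.single k (1 : ZMod 2))) ∧
    Submodule.span (ZMod 2)
      (Set.range (fun s : {s : Finset (Fin g ⊕ Fin g) // s.card ≤ n} =>
        ∏ k ∈ s.1, bgen (Pi.single k (1 : ZMod 2)))) = BoolDeg g n ∧
    Module.finrank (ZMod 2) (BoolDeg g n) = ∑ i ∈ Finset.range (n + 1), (2 * g).choose i := by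
  have independent := (linearIndependent_prod_bgen_single g).comp
    (Subtype.val : {s : Finset (Fin g ⊕ Fin g) // s.card ≤ n} → _) Subtype.val_injective
  have spanning := span_prod_bgen_single_eq_boolDeg g n
  refine ⟨independent, spanning, ?_⟩
  calc Module.finrank (ZMod 2) (BoolDeg g n)
      = Fintype.card {s : Finset (Fin g ⊕ Fin g) // s.card ≤ n} := by
        rw [← spanning]
        exact finrank_span_eq_card independent
    _ = ∑ i ∈ Finset.range (n + 1), (2 * g).choose i := by
        rw [card_finset_card_le, Fintype.card_sum, Fintype.card_fin, two_mul]

/-- for `g ≥ 2`, the images in `B³` of the square-free monomials of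
degree at most 3 in the `2g` generators `Ā₁,…,Ā_g,B̄₁,…,B̄_g` (indexed by subsets
`s ⊆ {A₁,…,A_g,B₁,…,B_g}` with `|s| ≤ 3`, the empty set giving `1`) form a basis of
`B³` over `ℤ/2ℤ`: they are linearly independent and span `B³`.  In particular
`dim B³ = 1 + 2g + C(2g,2) + C(2g,3)`. -/
theorem stmt17 (g : ℕ) (hg : 2 ≤ g) :
    LinearIndependent (ZMod 2)
      (fun s : {s : Finset (Fin g ⊕ Fin g) // s.card ≤ 3} =>
        ∏ k ∈ s.1, bgen (Pi.single k (1 : ZMod 2))) ∧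
    Submodule.span (ZMod 2)
      (Set.range (fun s : {s : Finset (Fin g ⊕ Fin g) // s.card ≤ 3} =>
        ∏ k ∈ s.1, bgen (Pi.single k (1 : ZMod 2)))) = BoolDeg g 3 ∧
    Module.finrank (ZMod 2) (BoolDeg g 3) =
      1 + 2 * g + (2 * g).choose 2 + (2 * g).choose 3 := by
  simpa [Finset.sum_range_succ] using stmt17_general g 3
end

section
/- Let g ≥ 4 and let c ∈ ℤ^{2g} be a vector whose g-th coordinate is odd (equivalently, the symplectic pairing of c with B_g = e_{2g} is odd). Then the square T_c² of the symplectic transvection along c lies in Γ_g(p₂), and its image in the abelianization of Γ_g(p₂) is a generator of that group (which is cyclic of order 2); in particular T_c² does not lie in the commutator subgroup of Γ_g(p₂). -/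
open Matrix

theorem zmodcast {a b : ℤ} (h : ((a : ZMod 2)) = (b : ZMod 2)) : a ≡ b [ZMOD 2] :=
  (ZMod.intCast_eq_intCast_iff a b 2).mp h

theorem zmodcast' {a b : ℤ} (h : a ≡ b [ZMOD 2]) : ((a : ZMod 2)) = (b : ZMod 2) :=
  (ZMod.intCast_eq_intCast_iff a b 2).mpr h

def GammaP2 (g : ℕ) (hg : 1 ≤ g) : Subgroup (Matrix.symplecticGroup (Fin g) ℤ) where
  carrier := {σ | ∀ i : Fin g ⊕ Fin g,
    (σ : Matrix (Fin g ⊕ Fin g) (Fin g ⊕ Fin g) ℤ) i (Sum.inr ⟨g - 1, by omega⟩) ≡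
      (1 : Matrix (Fin g ⊕ Fin g) (Fin g ⊕ Fin g) ℤ) i (Sum.inr ⟨g - 1, by omega⟩) [ZMOD 2]}
  one_mem' := fun _ => Int.ModEq.refl _
  mul_mem' := by
    intro a b ha hb i
    set bg : Fin g ⊕ Fin g := Sum.inr ⟨g - 1, by omega⟩ with hbg
    apply zmodcast
    have hab : ((a * b : Matrix.symplecticGroup (Fin g) ℤ) : Matrix (Fin g ⊕ Fin g) (Fin g ⊕ Fin g) ℤ) i bg =
        ∑ k, (a : Matrix (Fin g ⊕ Fin g) (Fin g ⊕ Fin g) ℤ) i k *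
          (b : Matrix (Fin g ⊕ Fin g) (Fin g ⊕ Fin g) ℤ) k bg := Matrix.mul_apply
    rw [hab]
    push_cast
    calc (∑ k, ((a : Matrix (Fin g ⊕ Fin g) (Fin g ⊕ Fin g) ℤ) i k : ZMod 2) *
            ((b : Matrix (Fin g ⊕ Fin g) (Fin g ⊕ Fin g) ℤ) k bg : ZMod 2))
        = ∑ k, ((a : Matrix (Fin g ⊕ Fin g) (Fin g ⊕ Fin g) ℤ) i k : ZMod 2) *
            ((1 : Matrix (Fin g ⊕ Fin g) (Fin g ⊕ Fin g) ℤ) k bg : ZMod 2) :=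
          Finset.sum_congr rfl fun k _ => by rw [zmodcast' (hb k)]
      _ = ((a : Matrix (Fin g ⊕ Fin g) (Fin g ⊕ Fin g) ℤ) i bg : ZMod 2) := by
          simp [Matrix.one_apply, apply_ite]
      _ = ((1 : Matrix (Fin g ⊕ Fin g) (Fin g ⊕ Fin g) ℤ) i bg : ZMod 2) := zmodcast' (ha i)
  inv_mem' := by
    intro a ha i
    set bg : Fin g ⊕ Fin g := Sum.inr ⟨g - 1, by omega⟩ with hbg
    have hmul : ((a⁻¹ : Matrix.symplecticGroup (Fin g) ℤ) : Matrix (Fin g ⊕ Fin g) (Fin g ⊕ Fin g) ℤ) *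
        ((a : Matrix.symplecticGroup (Fin g) ℤ) : Matrix (Fin g ⊕ Fin g) (Fin g ⊕ Fin g) ℤ) =
        (1 : Matrix (Fin g ⊕ Fin g) (Fin g ⊕ Fin g) ℤ) :=
      congrArg Subtype.val (inv_mul_cancel a)
    apply zmodcast
    calc (((a⁻¹ : Matrix.symplecticGroup (Fin g) ℤ) : Matrix (Fin g ⊕ Fin g) (Fin g ⊕ Fin g) ℤ) i bg : ZMod 2)
        = ∑ k, (((a⁻¹ : Matrix.symplecticGroup (Fin g) ℤ) : Matrix (Fin g ⊕ Fin g) (Fin g ⊕ Fin g) ℤ) i k : ZMod 2) *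
            ((1 : Matrix (Fin g ⊕ Fin g) (Fin g ⊕ Fin g) ℤ) k bg : ZMod 2) := by
          simp [Matrix.one_apply, apply_ite]
      _ = ∑ k, (((a⁻¹ : Matrix.symplecticGroup (Fin g) ℤ) : Matrix (Fin g ⊕ Fin g) (Fin g ⊕ Fin g) ℤ) i k : ZMod 2) *
            ((a : Matrix (Fin g ⊕ Fin g) (Fin g ⊕ Fin g) ℤ) k bg : ZMod 2) :=
          Finset.sum_congr rfl fun k _ => by rw [zmodcast' (ha k)]
      _ = ((((a⁻¹ : Matrix.symplecticGroup (Fin g) ℤ) : Matrix (Fin g ⊕ Fin g) (Fin g ⊕ Fin g) ℤ) *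
            ((a : Matrix.symplecticGroup (Fin g) ℤ) : Matrix (Fin g ⊕ Fin g) (Fin g ⊕ Fin g) ℤ)) i bg : ZMod 2) := by
          rw [Matrix.mul_apply]; push_cast; rfl
      _ = ((1 : Matrix (Fin g ⊕ Fin g) (Fin g ⊕ Fin g) ℤ) i bg : ZMod 2) := by rw [hmul]

/-- The standard symplectic form on `ℤ^{2g}`, determined by `⟨e_i, e_{g+i}⟩ = 1`. -/
def symFormZ {g : ℕ} (x y : Fin g ⊕ Fin g → ℤ) : ℤ :=
  ∑ i : Fin g, (x (Sum.inl i) * y (Sum.inr i) - x (Sum.inr i) * y (Sum.inl i))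

/-- The symplectic transvection `T_c : x ↦ x + ⟨x,c⟩c` along `c ∈ ℤ^{2g}`, as a matrix. -/
def symTransvection {g : ℕ} (c : Fin g ⊕ Fin g → ℤ) :
    Matrix (Fin g ⊕ Fin g) (Fin g ⊕ Fin g) ℤ :=
  1 + Matrix.of fun i j => symFormZ (Pi.single j 1) c * c i

/-!
A descent on the `ℓ¹` norm, as in the Euclidean algorithm, shows that `Γ_g(p₂)` is generated by the
transvections along basis vectors and the Eichler transformations `E(u, v)` of pairs of orthogonal
basis vectors, where each occurrence of `A_g` costs a factor `2` in the exponent. If a hyperbolic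
pair `p, q` is orthogonal to `u` and `v`, then `E(u, v) = [E(u, p)⁻¹, E(q, v)]`, and for `g ≥ 4`
such a pair exists inside `Γ_g(p₂)` for every Eichler generator. The relation
`E(u, v) E(u, w) = E(u, v + w) T_u^⟨w, v⟩` then puts all the transvections among the generators
into the commutator subgroup, except for `T_{A_g}²`, of which it only gives the square. Hence the
abelianization is generated by the class of `T_{A_g}²` and has order at most `2`.

Conversely, `s B_g ≡ B_g` modulo `2` makes `s ↦ ⟨s B_g, B_g⟩` additive modulo `4`, and this
homomorphism takes the value `-2 ⟨c, B_g⟩²` on `T_c²`, which is nonzero when `⟨c, B_g⟩` is odd.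
-/

/-! ### The symplectic form -/

section SymplecticForm

variable {g : ℕ} (x y z : Fin g ⊕ Fin g → ℤ)

theorem symFormZ_anticomm : symFormZ x y = -symFormZ y x := by
  simp only [symFormZ, ← Finset.sum_neg_distrib]
  exact Finset.sum_congr rfl fun i _ => by ring

@[simp]
theorem symFormZ_add_left : symFormZ (x + y) z = symFormZ x z + symFormZ y z := by
  simp only [symFormZ, ← Finset.sum_add_distrib, Pi.add_apply]
  exact Finset.sum_congr rfl fun i _ => by ring

@[simp]
theorem symFormZ_smul_left (a : ℤ) : symFormZ (a • x) z = a * symFormZ x z := by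
  simp only [symFormZ, Finset.mul_sum, Pi.smul_apply, smul_eq_mul]
  exact Finset.sum_congr rfl fun i _ => by ring

@[simp]
theorem symFormZ_add_right : symFormZ x (y + z) = symFormZ x y + symFormZ x z := by
  rw [symFormZ_anticomm, symFormZ_add_left, symFormZ_anticomm y, symFormZ_anticomm z]; ring

@[simp]
theorem symFormZ_smul_right (a : ℤ) : symFormZ x (a • z) = a * symFormZ x z := by
  rw [symFormZ_anticomm, symFormZ_smul_left, symFormZ_anticomm z]; ring

@[simp]
theorem symFormZ_self : symFormZ x x = 0 :=
  self_eq_neg.mp (symFormZ_anticomm x x)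

variable {x y} in
theorem symFormZ_eq_zero_symm (h : symFormZ x y = 0) : symFormZ y x = 0 := by
  rw [symFormZ_anticomm, h, neg_zero]

theorem dotProduct_J_mulVec : x ⬝ᵥ (J (Fin g) ℤ *ᵥ y) = -symFormZ x y := by
  simp only [dotProduct, J, fromBlocks_mulVec, zero_mulVec, neg_mulVec, one_mulVec, zero_add,
    add_zero, Fintype.sum_sum_type, Sum.elim_inl, Sum.elim_inr, Pi.neg_apply, Function.comp_apply,
    mul_neg, Finset.sum_neg_distrib, symFormZ, Finset.sum_sub_distrib]
  ring

theorem mem_symplecticGroup_iff_symFormZ {A : Matrix (Fin g ⊕ Fin g) (Fin g ⊕ Fin g) ℤ} :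
    A ∈ symplecticGroup (Fin g) ℤ ↔ ∀ x y, symFormZ (A *ᵥ x) (A *ᵥ y) = symFormZ x y := by
  have pullback (x y) : x ⬝ᵥ ((Aᵀ * J (Fin g) ℤ * A) *ᵥ y) = -symFormZ (A *ᵥ x) (A *ᵥ y) := by
    rw [← dotProduct_J_mulVec, ← mulVec_mulVec, ← mulVec_mulVec, dotProduct_mulVec,
      vecMul_transpose]
  rw [SymplecticGroup.mem_iff']
  constructor
  · intro h x y
    rw [← neg_inj, ← pullback, h, dotProduct_J_mulVec]
  · intro h
    ext r s
    have := pullback (Pi.single r 1) (Pi.single s 1)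
    rw [h, ← dotProduct_J_mulVec] at this
    simpa using this

end SymplecticForm

/-! ### The symplectic group acting on the lattice -/

section Action

variable {g : ℕ}

/-- The natural action of `Sp(2g, ℤ)` on column vectors. -/
instance : DistribMulAction (symplecticGroup (Fin g) ℤ) (Fin g ⊕ Fin g → ℤ) where
  smul s x := s.1 *ᵥ x
  one_smul := one_mulVec
  mul_smul s t x := (mulVec_mulVec x s.1 t.1).symm
  smul_zero s := mulVec_zero s.1
  smul_add s := mulVec_add s.1

theorem symplecticGroup_smul_def (s : symplecticGroup (Fin g) ℤ) (x : Fin g ⊕ Fin g → ℤ) :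
    s • x = s.1 *ᵥ x := rfl

instance : FaithfulSMul (symplecticGroup (Fin g) ℤ) (Fin g ⊕ Fin g → ℤ) where
  eq_of_smul_eq_smul h := Subtype.ext <| Matrix.mulVec_injective <| funext h

@[simp]
theorem symFormZ_smul_smul (s : symplecticGroup (Fin g) ℤ) (x y : Fin g ⊕ Fin g → ℤ) :
    symFormZ (s • x) (s • y) = symFormZ x y :=
  mem_symplecticGroup_iff_symFormZ.mp s.2 x y

end Action

/-! ### Transvections and Eichler transformations -/

section Transvections

open scoped commutatorElement

variable {g : ℕ}

theorem symFormZ_eq_sum_single (x c : Fin g ⊕ Fin g → ℤ) :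
    symFormZ x c = ∑ j, symFormZ (Pi.single j 1) c * x j := by
  simp [Fintype.sum_sum_type, symFormZ, Pi.single_apply, Finset.sum_sub_distrib, mul_comm,
    ← sub_eq_add_neg]

theorem symTransvection_mulVec (c x : Fin g ⊕ Fin g → ℤ) :
    symTransvection c *ᵥ x = x + symFormZ x c • c := by
  ext i
  rw [symTransvection, add_mulVec, one_mulVec, Pi.add_apply, Pi.add_apply, Pi.smul_apply,
    smul_eq_mul, symFormZ_eq_sum_single x c, Finset.sum_mul]
  simp only [mulVec, dotProduct, of_apply, mul_right_comm]

theorem symTransvection_mem (c : Fin g ⊕ Fin g → ℤ) :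
    symTransvection c ∈ symplecticGroup (Fin g) ℤ := by
  refine mem_symplecticGroup_iff_symFormZ.mpr fun x y => ?_
  simp only [symTransvection_mulVec, symFormZ_add_left, symFormZ_add_right, symFormZ_smul_left,
    symFormZ_smul_right, symFormZ_self]
  rw [symFormZ_anticomm c y]
  ring

/-- The transvection `T_c` as an element of the symplectic group. -/
def spTransvection (c : Fin g ⊕ Fin g → ℤ) : symplecticGroup (Fin g) ℤ :=
  ⟨symTransvection c, symTransvection_mem c⟩

theorem spTransvection_smul (c x : Fin g ⊕ Fin g → ℤ) :
    spTransvection c • x = x + symFormZ x c • c :=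
  symTransvection_mulVec c x

theorem spTransvection_zpow_smul (k : ℤ) (c x : Fin g ⊕ Fin g → ℤ) :
    spTransvection c ^ k • x = x + (k * symFormZ x c) • c := by
  have inv_smul (x) : (spTransvection c)⁻¹ • x = x - symFormZ x c • c := by
    rw [inv_smul_eq_iff, spTransvection_smul, sub_eq_add_neg, ← neg_smul, symFormZ_add_left,
      symFormZ_smul_left, symFormZ_self]
    module
  induction k generalizing x with
  | zero => simp
  | succ n ih =>
    rw [_root_.zpow_add_one, mul_smul, spTransvection_smul, ih]
    simp only [symFormZ_add_left, symFormZ_smul_left, symFormZ_self]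
    module
  | pred n ih =>
    rw [_root_.zpow_sub_one, mul_smul, inv_smul, ih, sub_eq_add_neg, ← neg_smul]
    simp only [symFormZ_add_left, symFormZ_smul_left, symFormZ_self]
    module

theorem conj_spTransvection_zpow (s : symplecticGroup (Fin g) ℤ) (k : ℤ)
    (c : Fin g ⊕ Fin g → ℤ) :
    s * spTransvection c ^ k * s⁻¹ = spTransvection (s • c) ^ k := by
  refine eq_of_smul_eq_smul fun x : Fin g ⊕ Fin g → ℤ => ?_
  have : symFormZ (s⁻¹ • x) c = symFormZ x (s • c) := by
    rw [← symFormZ_smul_smul s, smul_inv_smul]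
  simp only [mul_smul, spTransvection_zpow_smul, smul_add, smul_inv_smul, this, smul_comm s]

/-- The Eichler transformation `x ↦ x + k⟨x, u⟩v + k⟨x, v⟩u` of two orthogonal vectors `u` and `v`,
written as a product of transvections, which makes it symplectic for all `u` and `v`. -/
def eichler (k : ℤ) (u v : Fin g ⊕ Fin g → ℤ) : symplecticGroup (Fin g) ℤ :=
  spTransvection (u + v) ^ k * spTransvection u ^ (-k) * spTransvection v ^ (-k)

theorem conj_eichler (s : symplecticGroup (Fin g) ℤ) (k : ℤ) (u v : Fin g ⊕ Fin g → ℤ) :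
    s * eichler k u v * s⁻¹ = eichler k (s • u) (s • v) := by
  simp only [eichler, ← smul_add, ← conj_spTransvection_zpow]
  group

variable {u v w p q : Fin g ⊕ Fin g → ℤ}

theorem eichler_smul (k : ℤ) (huv : symFormZ u v = 0) (x : Fin g ⊕ Fin g → ℤ) :
    eichler k u v • x = x + (k * symFormZ x u) • v + (k * symFormZ x v) • u := by
  simp only [eichler, mul_smul, spTransvection_zpow_smul, symFormZ_add_left, symFormZ_add_right,
    symFormZ_smul_left, symFormZ_self, huv, symFormZ_eq_zero_symm huv]
  module

theorem eichler_zero_right (k : ℤ) (u : Fin g ⊕ Fin g → ℤ) : eichler k u 0 = 1 := by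
  have hu : symFormZ u 0 = 0 := by simpa using symFormZ_smul_right u 0 0
  refine eq_of_smul_eq_smul fun x : Fin g ⊕ Fin g → ℤ => ?_
  have hx : symFormZ x 0 = 0 := by simpa using symFormZ_smul_right x 0 0
  simp [eichler_smul k hu, hx]

theorem eichler_neg (k : ℤ) (huv : symFormZ u v = 0) : eichler (-k) u v = (eichler k u v)⁻¹ := by
  refine eq_inv_of_mul_eq_one_left (eq_of_smul_eq_smul fun x : Fin g ⊕ Fin g → ℤ => ?_)
  simp only [mul_smul, eichler_smul _ huv, symFormZ_add_left, symFormZ_smul_left, symFormZ_self,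
    huv, symFormZ_eq_zero_symm huv, one_smul]
  module

theorem eichler_comm (k : ℤ) (huv : symFormZ u v = 0) : eichler k u v = eichler k v u := by
  refine eq_of_smul_eq_smul fun x : Fin g ⊕ Fin g → ℤ => ?_
  rw [eichler_smul k huv, eichler_smul k (symFormZ_eq_zero_symm huv)]
  module

theorem eichler_mul_eichler (k : ℤ) (huv : symFormZ u v = 0) (huw : symFormZ u w = 0) :
    eichler k u v * eichler k u w =
      eichler k u (v + w) * spTransvection u ^ (k ^ 2 * symFormZ w v) := by
  have huvw : symFormZ u (v + w) = 0 := by rw [symFormZ_add_right, huv, huw, add_zero]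
  refine eq_of_smul_eq_smul fun x : Fin g ⊕ Fin g → ℤ => ?_
  simp only [mul_smul, eichler_smul _ huv, eichler_smul _ huw, eichler_smul _ huvw,
    spTransvection_zpow_smul, symFormZ_add_left, symFormZ_add_right, symFormZ_smul_left,
    symFormZ_self, huv, huw, symFormZ_eq_zero_symm huw]
  module

theorem eichler_eq_commutatorElement (k : ℤ) (huv : symFormZ u v = 0) (hup : symFormZ u p = 0)
    (huq : symFormZ u q = 0) (hpv : symFormZ p v = 0) (hqv : symFormZ q v = 0)
    (hpq : symFormZ p q = 1) :
    eichler k u v = ⁅(eichler k u p)⁻¹, eichler 1 q v⁆ := by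
  have smul_u : eichler 1 q v • u = u := by simp [eichler_smul _ hqv, huq, huv]
  have smul_p : eichler 1 q v • p = p + v := by simp [eichler_smul _ hqv, hpq, hpv]
  have conj : eichler 1 q v * eichler k u p * (eichler 1 q v)⁻¹ =
      eichler k u p * eichler k u v := by
    rw [conj_eichler, smul_u, smul_p, eichler_mul_eichler k hup huv, symFormZ_eq_zero_symm hpv]
    simp
  rw [commutatorElement_def, inv_inv, mul_assoc _ (eichler 1 q v), mul_assoc, conj,
    inv_mul_cancel_left]

end Transvections

/-! ### Membership in `Γ_g(p₂)` -/

section Basis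

variable {g : ℕ}

/-- The standard basis `A_i = basisVec (inl i)`, `B_i = basisVec (inr i)` of `ℤ^{2g}`. -/
abbrev basisVec (r : Fin g ⊕ Fin g) : Fin g ⊕ Fin g → ℤ := Pi.single r 1

/-- The index `i` of the hyperbolic pair `(A_i, B_i)` to which a basis vector belongs. -/
def pairIndex (r : Fin g ⊕ Fin g) : Fin g := Sum.elim id id r

@[simp]
theorem pairIndex_inl (i : Fin g) : pairIndex (.inl i) = i := rfl

@[simp]
theorem pairIndex_inr (i : Fin g) : pairIndex (.inr i) = i := rfl

@[simp]
theorem pairIndex_swap (r : Fin g ⊕ Fin g) : pairIndex r.swap = pairIndex r := by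
  cases r <;> rfl

theorem pairIndex_eq_iff {r : Fin g ⊕ Fin g} {i : Fin g} :
    pairIndex r = i ↔ r = .inl i ∨ r = .inr i := by
  cases r <;> simp

theorem basisVec_apply_of_ne {r s : Fin g ⊕ Fin g} (h : s ≠ r) : basisVec r s = 0 :=
  Pi.single_eq_of_ne h 1

@[simp]
theorem symFormZ_basisVec_inl (x : Fin g ⊕ Fin g → ℤ) (i : Fin g) :
    symFormZ x (basisVec (.inl i)) = -x (.inr i) := by
  simp [symFormZ, Pi.single_apply]

@[simp]
theorem symFormZ_basisVec_inr (x : Fin g ⊕ Fin g → ℤ) (i : Fin g) :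
    symFormZ x (basisVec (.inr i)) = x (.inl i) := by
  simp [symFormZ, Pi.single_apply]

theorem abs_symFormZ_basisVec (x : Fin g ⊕ Fin g → ℤ) (r : Fin g ⊕ Fin g) :
    |symFormZ x (basisVec r)| = |x r.swap| := by
  cases r <;> simp

theorem symFormZ_basisVec_eq_zero_iff {x : Fin g ⊕ Fin g → ℤ} {r : Fin g ⊕ Fin g} :
    symFormZ x (basisVec r) = 0 ↔ x r.swap = 0 := by
  rw [← abs_eq_zero, abs_symFormZ_basisVec, abs_eq_zero]

theorem symFormZ_basisVec_basisVec {r s : Fin g ⊕ Fin g} (h : pairIndex r ≠ pairIndex s) :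
    symFormZ (basisVec r) (basisVec s) = 0 :=
  symFormZ_basisVec_eq_zero_iff.mpr <| basisVec_apply_of_ne fun hs => h (by simp [← hs])

end Basis

section GammaP2

/-- The index of the pair `(A_g, B_g)`. -/
def lastIndex {g : ℕ} (hg : 1 ≤ g) : Fin g := ⟨g - 1, by omega⟩

variable {g : ℕ} {hg : 1 ≤ g}

theorem mem_gammaP2_iff {s : symplecticGroup (Fin g) ℤ} :
    s ∈ GammaP2 g hg ↔ ∃ x : Fin g ⊕ Fin g → ℤ,
      s • basisVec (.inr (lastIndex hg)) = basisVec (.inr (lastIndex hg)) + (2 : ℤ) • x := by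
  have mem_iff : s ∈ GammaP2 g hg ↔ ∀ i, ∃ a, (s • basisVec (.inr (lastIndex hg))) i =
      basisVec (.inr (lastIndex hg)) i + 2 * a := by
    refine forall_congr' fun i => Int.modEq_comm.trans (Int.modEq_iff_dvd.trans ?_)
    simp [symplecticGroup_smul_def, lastIndex, one_apply, Pi.single_apply, dvd_def,
      sub_eq_iff_eq_add']
  rw [mem_iff, Classical.skolem]
  exact exists_congr fun x => funext_iff.symm

variable {k : ℤ} {c u v : Fin g ⊕ Fin g → ℤ}

theorem spTransvection_zpow_mem_gammaP2 (h : 2 ∣ k * c (.inl (lastIndex hg))) :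
    spTransvection c ^ k ∈ GammaP2 g hg := by
  obtain ⟨d, hd⟩ := h
  refine mem_gammaP2_iff.mpr ⟨-d • c, ?_⟩
  rw [spTransvection_zpow_smul, symFormZ_anticomm, symFormZ_basisVec_inr, mul_neg, hd]
  module

theorem eichler_mem_gammaP2 (hu : 2 ∣ k * u (.inl (lastIndex hg)))
    (hv : 2 ∣ k * v (.inl (lastIndex hg))) : eichler k u v ∈ GammaP2 g hg := by
  refine mul_mem (mul_mem ?_ ?_) ?_ <;> apply spTransvection_zpow_mem_gammaP2
  · rw [Pi.add_apply, mul_add]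
    exact dvd_add hu hv
  · simpa using hu
  · simpa using hv

theorem eichler_mem_commutator {i : Fin g} (hi : i ≠ lastIndex hg)
    (hu : 2 ∣ k * u (.inl (lastIndex hg))) (hv : v (.inl (lastIndex hg)) = 0)
    (huv : symFormZ u v = 0) (hui : ∀ r, pairIndex r = i → u r = 0)
    (hvi : ∀ r, pairIndex r = i → v r = 0) :
    eichler k u v ∈ ⁅GammaP2 g hg, GammaP2 g hg⁆ := by
  have orthogonal {w : Fin g ⊕ Fin g → ℤ} (hw : ∀ r, pairIndex r = i → w r = 0)
      {r : Fin g ⊕ Fin g} (hr : pairIndex r = i) : symFormZ w (basisVec r) = 0 :=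
    symFormZ_basisVec_eq_zero_iff.mpr (hw _ (by rw [pairIndex_swap, hr]))
  have hA := pairIndex_inl i
  have hB := pairIndex_inr i
  rw [eichler_eq_commutatorElement (p := basisVec (.inl i)) (q := basisVec (.inr i)) k huv
    (orthogonal hui hA) (orthogonal hui hB) (symFormZ_eq_zero_symm (orthogonal hvi hA))
    (symFormZ_eq_zero_symm (orthogonal hvi hB)) (by simp)]
  exact Subgroup.commutator_mem_commutator
    (inv_mem (eichler_mem_gammaP2 hu (by simp [Ne.symm hi])))
    (eichler_mem_gammaP2 (by simp) (by simp [hv]))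

theorem exists_fin_notMem {s : Finset (Fin g)} (hs : s.card < g) : ∃ i, i ∉ s := by
  simpa using Finset.exists_mem_notMem_of_card_lt_card (t := .univ) (by simpa using hs)

variable {r s : Fin g ⊕ Fin g}

theorem eichler_basisVec_mem_commutator (hg4 : 4 ≤ g)
    (hrs : pairIndex r ≠ pairIndex s) (hs : pairIndex s ≠ lastIndex hg)
    (hr : 2 ∣ k * basisVec r (.inl (lastIndex hg))) :
    eichler k (basisVec r) (basisVec s) ∈ ⁅GammaP2 g hg, GammaP2 g hg⁆ := by
  obtain ⟨i, hi⟩ := exists_fin_notMem (s := {lastIndex hg, pairIndex r, pairIndex s})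
    (Finset.card_le_three.trans_lt hg4)
  simp only [Finset.mem_insert, Finset.mem_singleton, not_or] at hi
  obtain ⟨hi, hir, his⟩ := hi
  refine eichler_mem_commutator hi hr (basisVec_apply_of_ne ?_) (symFormZ_basisVec_basisVec hrs)
    (fun t ht => basisVec_apply_of_ne ?_) (fun t ht => basisVec_apply_of_ne ?_) <;>
  rintro rfl
  exacts [hs rfl, hir ht.symm, his ht.symm]

theorem spTransvection_basisVec_zpow_mem_commutator (hg4 : 4 ≤ g)
    (hr : 2 ∣ k * basisVec r (.inl (lastIndex hg))) :
    spTransvection (basisVec r) ^ k ^ 2 ∈ ⁅GammaP2 g hg, GammaP2 g hg⁆ := by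
  obtain ⟨i, hi⟩ := exists_fin_notMem (s := {lastIndex hg, pairIndex r})
    (Finset.card_le_two.trans_lt (by omega))
  obtain ⟨j, hj⟩ := exists_fin_notMem (s := {lastIndex hg, pairIndex r, i})
    (Finset.card_le_three.trans_lt hg4)
  simp only [Finset.mem_insert, Finset.mem_singleton, not_or] at hi hj
  have eichler_mem {s : Fin g ⊕ Fin g} (hs : pairIndex s = i) :
      eichler k (basisVec r) (basisVec s) ∈ ⁅GammaP2 g hg, GammaP2 g hg⁆ :=
    eichler_basisVec_mem_commutator hg4 (by rw [hs]; exact Ne.symm hi.2) (by rw [hs]; exact hi.1) hr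
  have hrB : symFormZ (basisVec r) (basisVec (.inr i)) = 0 :=
    symFormZ_basisVec_basisVec (Ne.symm hi.2)
  have hrA : symFormZ (basisVec r) (basisVec (.inl i)) = 0 :=
    symFormZ_basisVec_basisVec (Ne.symm hi.2)
  have eichler_add_mem : eichler k (basisVec r) (basisVec (.inr i) + basisVec (.inl i)) ∈
      ⁅GammaP2 g hg, GammaP2 g hg⁆ := by
    refine eichler_mem_commutator hj.1 hr ?_ (by rw [symFormZ_add_right, hrA, hrB, add_zero])
      (fun t ht => basisVec_apply_of_ne ?_) (fun t ht => ?_)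
    · simp [Ne.symm hi.1]
    · rintro rfl
      exact hj.2.1 ht.symm
    · have hti : pairIndex t ≠ i := ht ▸ hj.2.2
      rw [Pi.add_apply, basisVec_apply_of_ne (by rintro rfl; exact hti rfl),
        basisVec_apply_of_ne (by rintro rfl; exact hti rfl), add_zero]
  have pairing : symFormZ (basisVec (.inl i)) (basisVec (.inr i)) = 1 := by simp
  have product := eichler_mul_eichler k hrB hrA
  rw [pairing, mul_one] at product
  exact (mul_mem_cancel_left eichler_add_mem).mp
    (product ▸ mul_mem (eichler_mem rfl) (eichler_mem rfl))

end GammaP2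

/-! ### Elementary subgroups -/

section PairLattice

variable {g : ℕ} {S : Finset (Fin g)} {i : Fin g}

/-- The sublattice of `ℤ^{2g}` spanned by the `A_i` and `B_i` with `i ∈ S`. -/
def pairLattice (S : Finset (Fin g)) : AddSubgroup (Fin g ⊕ Fin g → ℤ) :=
  AddSubgroup.closure (basisVec '' {r | pairIndex r ∈ S})

theorem basisVec_mem_pairLattice {r : Fin g ⊕ Fin g} (hr : pairIndex r ∈ S) :
    basisVec r ∈ pairLattice S :=
  AddSubgroup.subset_closure (Set.mem_image_of_mem _ hr)

theorem mem_pairLattice_iff {x : Fin g ⊕ Fin g → ℤ} :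
    x ∈ pairLattice S ↔ ∀ r, pairIndex r ∉ S → x r = 0 := by
  constructor
  · intro hx r hr
    induction hx using AddSubgroup.closure_induction with
    | mem x hx =>
      obtain ⟨t, ht, rfl⟩ := hx
      exact basisVec_apply_of_ne fun h => hr (h ▸ ht)
    | zero => rfl
    | add x y _ _ hx hy => rw [Pi.add_apply, hx, hy, add_zero]
    | neg x _ hx => rw [Pi.neg_apply, hx, neg_zero]
  · intro hx
    rw [pi_eq_sum_univ' x]
    refine sum_mem fun r _ => ?_
    by_cases hr : pairIndex r ∈ S
    · exact zsmul_mem (basisVec_mem_pairLattice hr) _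
    · simp [hx r hr]

theorem symFormZ_basisVec_eq_zero_of_mem_pairLattice {x : Fin g ⊕ Fin g → ℤ}
    (hx : x ∈ pairLattice S) {r : Fin g ⊕ Fin g} (hr : pairIndex r ∉ S) :
    symFormZ x (basisVec r) = 0 :=
  symFormZ_basisVec_eq_zero_iff.mpr (mem_pairLattice_iff.mp hx _ (by rwa [pairIndex_swap]))

/-- The symplectic matrices fixing all `A_i` and `B_i` with `i ∉ S`. -/
def pairFixer (S : Finset (Fin g)) : Subgroup (symplecticGroup (Fin g) ℤ) :=
  fixingSubgroup _ (basisVec '' {r | pairIndex r ∉ S})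

variable {s : symplecticGroup (Fin g) ℤ}

theorem mem_pairFixer_iff :
    s ∈ pairFixer S ↔ ∀ r, pairIndex r ∉ S → s • basisVec r = basisVec r := by
  simp only [pairFixer, mem_fixingSubgroup_iff, Set.forall_mem_image, Set.mem_ofPred_eq]

theorem smul_apply_of_mem_pairFixer (hs : s ∈ pairFixer S) (x : Fin g ⊕ Fin g → ℤ)
    {r : Fin g ⊕ Fin g} (hr : pairIndex r ∉ S) : (s • x) r = x r := by
  have pairing : symFormZ (s • x) (basisVec r.swap) = symFormZ x (basisVec r.swap) := by
    rw [← symFormZ_smul_smul s x, mem_pairFixer_iff.mp hs _ (by rwa [pairIndex_swap])]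
  cases r <;> simpa using pairing

theorem smul_mem_pairLattice (hs : s ∈ pairFixer S) {x : Fin g ⊕ Fin g → ℤ}
    (hx : x ∈ pairLattice S) : s • x ∈ pairLattice S :=
  mem_pairLattice_iff.mpr fun r hr => by
    rw [smul_apply_of_mem_pairFixer hs x hr, mem_pairLattice_iff.mp hx r hr]

theorem pairFixer_empty : pairFixer (∅ : Finset (Fin g)) = ⊥ :=
  (Subgroup.eq_bot_iff_forall _).mpr fun s hs =>
    eq_of_smul_eq_smul fun x : Fin g ⊕ Fin g → ℤ => funext fun r => by
      rw [smul_apply_of_mem_pairFixer hs x (Finset.notMem_empty _), one_smul]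

theorem spTransvection_zpow_mem_pairFixer {c : Fin g ⊕ Fin g → ℤ} (hc : c ∈ pairLattice S)
    (k : ℤ) : spTransvection c ^ k ∈ pairFixer S :=
  mem_pairFixer_iff.mpr fun r hr => by
    rw [spTransvection_zpow_smul,
      symFormZ_eq_zero_symm (symFormZ_basisVec_eq_zero_of_mem_pairLattice hc hr), mul_zero,
      zero_smul, add_zero]

theorem eichler_mem_pairFixer {u v : Fin g ⊕ Fin g → ℤ} (hu : u ∈ pairLattice S)
    (hv : v ∈ pairLattice S) (k : ℤ) : eichler k u v ∈ pairFixer S :=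
  mul_mem (mul_mem (spTransvection_zpow_mem_pairFixer (add_mem hu hv) _)
    (spTransvection_zpow_mem_pairFixer hu _)) (spTransvection_zpow_mem_pairFixer hv _)

end PairLattice

section Level

variable {g : ℕ} (hg : 1 ≤ g)

/-- The weight of a basis vector in the generators of `Γ_g(p₂)`: the least positive `k` for which
`k • basisVec r` has even pairing with `B_g`. -/
def level (r : Fin g ⊕ Fin g) : ℤ := if r = .inl (lastIndex hg) then 2 else 1

variable {hg} {r s : Fin g ⊕ Fin g}

theorem level_of_pairIndex_ne (h : pairIndex r ≠ lastIndex hg) : level hg r = 1 :=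
  if_neg fun hr => h (by rw [hr, pairIndex_inl])

@[simp]
theorem level_inr (i : Fin g) : level hg (.inr i) = 1 := if_neg (by simp)

theorem level_pos : 0 < level hg r := by
  unfold level; split_ifs <;> norm_num

theorem level_dvd_two : level hg r ∣ 2 := by
  unfold level; split_ifs <;> norm_num

theorem two_dvd_level_mul : 2 ∣ level hg r * basisVec r (.inl (lastIndex hg)) := by
  by_cases h : r = .inl (lastIndex hg)
  · simp [level, h]
  · simp [basisVec_apply_of_ne (Ne.symm h)]

theorem level_mul_level_swap_lt : level hg r * level hg r.swap < 4 := by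
  cases r <;>
    simp only [level, Sum.inl.injEq, Sum.swap_inl, Sum.swap_inr, reduceCtorEq, ↓reduceIte,
      mul_one, one_mul] <;>
    split_ifs <;> norm_num

theorem level_mul_level_mul_lt (h : pairIndex r ≠ pairIndex s) :
    level hg r * level hg s.swap * (level hg s * level hg r.swap) < 4 := by
  rcases ne_or_eq (pairIndex r) (lastIndex hg) with hr | hr
  · have hr' : pairIndex r.swap ≠ lastIndex hg := by rwa [pairIndex_swap]
    rw [level_of_pairIndex_ne hr, level_of_pairIndex_ne hr', one_mul, mul_one, mul_comm]
    exact level_mul_level_swap_lt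
  · have hs : pairIndex s ≠ lastIndex hg := hr ▸ h.symm
    have hs' : pairIndex s.swap ≠ lastIndex hg := by rwa [pairIndex_swap]
    rw [level_of_pairIndex_ne hs, level_of_pairIndex_ne hs', one_mul, mul_one]
    exact level_mul_level_swap_lt

end Level

section ElementarySubgroup

variable {g : ℕ} {hg : 1 ≤ g} {S : Finset (Fin g)} {r s : Fin g ⊕ Fin g}

/-- The subgroup of `Γ_g(p₂)` generated by the powers of basis transvections and of Eichler
transformations of pairs of basis vectors prescribed by `level`, for basis vectors with
index in `S`. -/
def elementarySubgroup (hg : 1 ≤ g) (S : Finset (Fin g)) : Subgroup (symplecticGroup (Fin g) ℤ) :=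
  Subgroup.closure
    ({t | ∃ r, pairIndex r ∈ S ∧ spTransvection (basisVec r) ^ level hg r = t} ∪
      {t | ∃ r s, pairIndex r ∈ S ∧ pairIndex s ∈ S ∧ pairIndex r ≠ pairIndex s ∧
        eichler (level hg r * level hg s) (basisVec r) (basisVec s) = t})

theorem elementarySubgroup_le {H : Subgroup (symplecticGroup (Fin g) ℤ)}
    (hT : ∀ r, pairIndex r ∈ S → spTransvection (basisVec r) ^ level hg r ∈ H)
    (hE : ∀ r s, pairIndex r ∈ S → pairIndex s ∈ S → pairIndex r ≠ pairIndex s →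
      eichler (level hg r * level hg s) (basisVec r) (basisVec s) ∈ H) :
    elementarySubgroup hg S ≤ H := by
  refine (Subgroup.closure_le H).mpr ?_
  rintro _ (⟨r, hr, rfl⟩ | ⟨r, s, hr, hs, hrs, rfl⟩)
  exacts [hT r hr, hE r s hr hs hrs]

theorem spTransvection_mem_elementarySubgroup (hr : pairIndex r ∈ S) (n : ℤ) :
    spTransvection (basisVec r) ^ (level hg r * n) ∈ elementarySubgroup hg S := by
  rw [_root_.zpow_mul]
  exact zpow_mem (Subgroup.subset_closure (.inl ⟨r, hr, rfl⟩)) n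

theorem eichler_mem_elementarySubgroup (hr : pairIndex r ∈ S) (hs : pairIndex s ∈ S)
    (hrs : pairIndex r ≠ pairIndex s) :
    eichler (level hg r * level hg s) (basisVec r) (basisVec s) ∈ elementarySubgroup hg S :=
  Subgroup.subset_closure (.inr ⟨r, s, hr, hs, hrs, rfl⟩)

theorem elementarySubgroup_mono {S' : Finset (Fin g)} (h : S ⊆ S') :
    elementarySubgroup hg S ≤ elementarySubgroup hg S' :=
  elementarySubgroup_le
    (fun r hr => by simpa using spTransvection_mem_elementarySubgroup (hg := hg) (h hr) 1)
    (fun _ _ hr hs => eichler_mem_elementarySubgroup (h hr) (h hs))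

theorem elementarySubgroup_le_gammaP2 : elementarySubgroup hg S ≤ GammaP2 g hg := by
  refine elementarySubgroup_le (fun r _ => spTransvection_zpow_mem_gammaP2 two_dvd_level_mul)
    fun r s _ _ _ => eichler_mem_gammaP2 ?_ ?_
  · rw [mul_right_comm]
    exact two_dvd_level_mul.mul_right _
  · rw [mul_assoc]
    exact two_dvd_level_mul.mul_left _

theorem elementarySubgroup_le_pairFixer : elementarySubgroup hg S ≤ pairFixer S :=
  elementarySubgroup_le
    (fun _ hr => spTransvection_zpow_mem_pairFixer (basisVec_mem_pairLattice hr) _)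
    fun _ _ hr hs _ =>
      eichler_mem_pairFixer (basisVec_mem_pairLattice hr) (basisVec_mem_pairLattice hs) _

end ElementarySubgroup

/-! ### Descent on the `ℓ¹` norm -/

section Descent

theorem eq_zero_or_eq_zero_of_two_mul_abs_le {a b m n : ℤ} (hmn : m * n < 4)
    (ha : 2 * |a| ≤ m * |b|) (hb : 2 * |b| ≤ n * |a|) : a = 0 ∨ b = 0 := by
  by_contra! h
  have pos : 0 < |a| * |b| := mul_pos (abs_pos.mpr h.1) (abs_pos.mpr h.2)
  have : 4 * (|a| * |b|) ≤ m * n * (|a| * |b|) :=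
    calc 4 * (|a| * |b|) = 2 * |a| * (2 * |b|) := by ring
      _ ≤ m * |b| * (n * |a|) := mul_le_mul ha hb (by positivity) (le_trans (by positivity) ha)
      _ = m * n * (|a| * |b|) := by ring
  exact absurd (le_of_mul_le_mul_right this pos) hmn.not_ge

variable {g : ℕ} {hg : 1 ≤ g} {S : Finset (Fin g)} {w : Fin g ⊕ Fin g → ℤ}

/-- The `ℓ¹` norm on `ℤ^{2g}`, with values in `ℕ` so that it attains its minimum on every orbit. -/
def l1Norm (w : Fin g ⊕ Fin g → ℤ) : ℕ := ∑ r, (w r).natAbs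

theorem l1Norm_le_l1Norm_add_smul_basisVec_iff (d : ℤ) (r : Fin g ⊕ Fin g) :
    l1Norm w ≤ l1Norm (w + d • basisVec r) ↔ |w r| ≤ |w r + d| := by
  have off (t) (ht : t ∈ Finset.univ.erase r) : (w + d • basisVec r) t = w t := by
    simp [basisVec_apply_of_ne (Finset.ne_of_mem_erase ht)]
  rw [l1Norm, l1Norm, ← Finset.add_sum_erase _ _ (Finset.mem_univ r),
    ← Finset.add_sum_erase _ _ (Finset.mem_univ r),
    Finset.sum_congr rfl fun t ht => congrArg Int.natAbs (off t ht), add_le_add_iff_right,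
    ← Int.natCast_natAbs, ← Int.natCast_natAbs, Nat.cast_le]
  simp

/-- `w` has the smallest `ℓ¹` norm in its orbit under the elementary subgroup. -/
def IsL1Minimal (hg : 1 ≤ g) (S : Finset (Fin g)) (w : Fin g ⊕ Fin g → ℤ) : Prop :=
  ∀ κ ∈ elementarySubgroup hg S, l1Norm w ≤ l1Norm (κ • w)

theorem exists_isL1Minimal_smul (hg : 1 ≤ g) (S : Finset (Fin g)) (w : Fin g ⊕ Fin g → ℤ) :
    ∃ κ ∈ elementarySubgroup hg S, IsL1Minimal hg S (κ • w) := by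
  obtain ⟨κ, hκ, hmin⟩ := exists_minimalFor_of_wellFoundedLT (· ∈ elementarySubgroup hg S)
    (fun κ => l1Norm (κ • w)) ⟨1, one_mem _⟩
  refine ⟨κ, hκ, fun κ' hκ' => ?_⟩
  rw [← mul_smul]
  exact (le_total _ _).elim id fun h => hmin (mul_mem hκ' hκ) h

namespace IsL1Minimal

variable (hw : IsL1Minimal hg S w) {r s : Fin g ⊕ Fin g}
include hw

theorem two_mul_abs_le_of_mem {κ : symplecticGroup (Fin g) ℤ}
    (hκ : κ ∈ elementarySubgroup hg S) {d : ℤ} (hd : d ≠ 0) (hadd : κ • w = w + d • basisVec r)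
    (hsub : κ⁻¹ • w = w + (-d) • basisVec r) : 2 * |w r| ≤ |d| := by
  have le_add : |w r| ≤ |w r + d| :=
    (l1Norm_le_l1Norm_add_smul_basisVec_iff d r).mp (hadd ▸ hw κ hκ)
  have le_sub : |w r| ≤ |w r + -d| :=
    (l1Norm_le_l1Norm_add_smul_basisVec_iff (-d) r).mp (hsub ▸ hw κ⁻¹ (inv_mem hκ))
  grind

theorem two_mul_abs_le_swap (hr : pairIndex r ∈ S) (h : w r.swap ≠ 0) :
    2 * |w r| ≤ level hg r * |w r.swap| := by
  have := hw.two_mul_abs_le_of_mem (spTransvection_mem_elementarySubgroup hr 1)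
    (d := level hg r * symFormZ w (basisVec r))
    (mul_ne_zero level_pos.ne' (symFormZ_basisVec_eq_zero_iff.not.mpr h))
    (by rw [mul_one, spTransvection_zpow_smul])
    (by rw [mul_one, ← _root_.zpow_neg, spTransvection_zpow_smul, neg_mul])
  rwa [abs_mul, abs_symFormZ_basisVec, abs_of_pos level_pos] at this

theorem two_mul_abs_le_of_swap_eq_zero (hr : pairIndex r ∈ S) (hs : pairIndex s ∈ S)
    (hrs : pairIndex r ≠ pairIndex s) (hr0 : w r.swap = 0) (hs0 : w s.swap ≠ 0) :
    2 * |w r| ≤ level hg r * level hg s * |w s.swap| := by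
  have orthogonal := symFormZ_basisVec_basisVec hrs
  have hr0 := symFormZ_basisVec_eq_zero_iff.mpr hr0
  have level_mul_pos : 0 < level hg r * level hg s := mul_pos level_pos level_pos
  have := hw.two_mul_abs_le_of_mem (eichler_mem_elementarySubgroup hr hs hrs)
    (d := level hg r * level hg s * symFormZ w (basisVec s)) (r := r)
    (mul_ne_zero level_mul_pos.ne' (symFormZ_basisVec_eq_zero_iff.not.mpr hs0))
    (by simp [eichler_smul _ orthogonal, hr0])
    (by simp [← eichler_neg _ orthogonal, eichler_smul _ orthogonal, hr0])
  rwa [abs_mul, abs_symFormZ_basisVec, abs_of_pos level_mul_pos] at this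

theorem apply_eq_zero_or_apply_eq_zero (hr : pairIndex r ∈ S) (hs : pairIndex s ∈ S)
    (hrs : r ≠ s) : w r = 0 ∨ w s = 0 := by
  have within {t : Fin g ⊕ Fin g} (ht : pairIndex t ∈ S) : w t = 0 ∨ w t.swap = 0 := by
    by_contra! h
    refine (eq_zero_or_eq_zero_of_two_mul_abs_le level_mul_level_swap_lt
      (hw.two_mul_abs_le_swap ht h.2) ?_).elim h.1 h.2
    simpa using hw.two_mul_abs_le_swap (r := t.swap) (by rwa [pairIndex_swap]) (by simpa using h.1)
  by_cases pair : pairIndex r = pairIndex s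
  · obtain rfl : s = r.swap := by cases r <;> cases s <;> simp_all
    exact within hr
  by_contra! h
  have hr0 : w r.swap = 0 := (within hr).resolve_left h.1
  have hs0 : w s.swap = 0 := (within hs).resolve_left h.2
  refine (eq_zero_or_eq_zero_of_two_mul_abs_le (level_mul_level_mul_lt (hg := hg) pair)
    ?_ ?_).elim h.1 h.2
  · simpa using hw.two_mul_abs_le_of_swap_eq_zero hr (s := s.swap) (by rwa [pairIndex_swap])
      (by rwa [pairIndex_swap]) hr0 (by simpa using h.2)
  · simpa using hw.two_mul_abs_le_of_swap_eq_zero hs (s := r.swap) (by rwa [pairIndex_swap])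
      (by rw [pairIndex_swap]; exact Ne.symm pair) hs0 (by simpa using h.1)

theorem eq_smul_basisVec (hmem : w ∈ pairLattice S) (hw0 : w ≠ 0) :
    ∃ k, pairIndex k ∈ S ∧ w = w k • basisVec k := by
  obtain ⟨k, hk⟩ := Function.ne_iff.mp hw0
  have hkS : pairIndex k ∈ S := by_contra fun h => hk (mem_pairLattice_iff.mp hmem k h)
  refine ⟨k, hkS, funext fun r => ?_⟩
  rcases eq_or_ne r k with rfl | hr
  · simp
  · rw [Pi.smul_apply, basisVec_apply_of_ne hr, smul_zero]
    by_cases hrS : pairIndex r ∈ S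
    · exact (hw.apply_eq_zero_or_apply_eq_zero hrS hkS hr).resolve_right hk
    · exact mem_pairLattice_iff.mp hmem r hrS

end IsL1Minimal

theorem exists_smul_eq_smul_basisVec (hg : 1 ≤ g) (hw : w ∈ pairLattice S) (hw0 : w ≠ 0) :
    ∃ κ ∈ elementarySubgroup hg S, ∃ k, pairIndex k ∈ S ∧ ∃ q : ℤ, κ • w = q • basisVec k := by
  obtain ⟨κ, hκ, hmin⟩ := exists_isL1Minimal_smul hg S w
  obtain ⟨k, hk, eq⟩ := hmin.eq_smul_basisVec
    (smul_mem_pairLattice (elementarySubgroup_le_pairFixer hκ) hw) ((smul_ne_zero_iff_ne κ).mpr hw0)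
  exact ⟨κ, hκ, k, hk, _, eq⟩

theorem eq_one_or_neg_one_of_smul_basisVec_eq {t : symplecticGroup (Fin g) ℤ}
    {q : ℤ} {k b : Fin g ⊕ Fin g} (h : t • basisVec b = q • basisVec k) : q = 1 ∨ q = -1 := by
  have : basisVec b = q • (t⁻¹ • basisVec k) := by rw [← smul_comm, ← h, inv_smul_smul]
  have := congrFun this b
  rw [basisVec, Pi.single_eq_same, Pi.smul_apply, smul_eq_mul] at this
  exact Int.isUnit_iff.mp (IsUnit.of_mul_eq_one _ this.symm)

end Descent

/-! ### Generators of `Γ_g(p₂)` -/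

section Generation

variable {g : ℕ} {hg : 1 ≤ g} {S : Finset (Fin g)} {i : Fin g}

open MulAction

theorem orbit_smul_of_mem {G X : Type*} [Group G] [MulAction G X] {H : Subgroup G} {a : G}
    (ha : a ∈ H) (x : X) : orbit H (a • x) = orbit H x :=
  orbit_smul (⟨a, ha⟩ : H) x

theorem orbit_neg_eq_of_orbit_eq {G A : Type*} [Group G] [AddGroup A] [DistribMulAction G A]
    {x y : A} (h : orbit G x = orbit G y) : orbit G (-x) = orbit G (-y) := by
  obtain ⟨a, rfl⟩ := orbit_eq_iff.mp h
  rw [← smul_neg, orbit_smul]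

theorem spTransvection_inr_mem_elementarySubgroup (hi : i ∈ S) (n : ℤ) :
    spTransvection (basisVec (.inr i)) ^ n ∈ elementarySubgroup hg S := by
  simpa using spTransvection_mem_elementarySubgroup (hg := hg) (r := .inr i) hi n

theorem orbit_neg_basisVec_inr (hi : i ∈ S) :
    orbit (elementarySubgroup hg S) (-basisVec (.inr i)) =
      orbit (elementarySubgroup hg S) (basisVec (.inr i)) := by
  have sq_mem : spTransvection (basisVec (.inl i)) ^ (2 : ℤ) ∈ elementarySubgroup hg S := by
    obtain ⟨n, hn⟩ := level_dvd_two (hg := hg) (r := .inl i)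
    exact hn ▸ spTransvection_mem_elementarySubgroup hi n
  have hAB : symFormZ (basisVec (.inl i)) (basisVec (.inr i)) = 1 := by simp
  have hBA : symFormZ (basisVec (.inr i)) (basisVec (.inl i)) = -1 := by simp
  have eq : spTransvection (basisVec (.inl i)) ^ (2 : ℤ) •
      spTransvection (basisVec (.inr i)) ^ (1 : ℤ) •
      spTransvection (basisVec (.inl i)) ^ (2 : ℤ) • -basisVec (.inr i) = basisVec (.inr i) := by
    simp only [← neg_one_smul ℤ (basisVec (.inr i)), spTransvection_zpow_smul, symFormZ_add_left,
      symFormZ_smul_left, symFormZ_self, hAB, hBA]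
    module
  rw [← orbit_smul_of_mem sq_mem (-_),
    ← orbit_smul_of_mem (spTransvection_inr_mem_elementarySubgroup hi 1),
    ← orbit_smul_of_mem sq_mem, eq]

theorem orbit_basisVec_inl (hi : i ∈ S) (hS : lastIndex hg ∉ S) :
    orbit (elementarySubgroup hg S) (basisVec (.inl i)) =
      orbit (elementarySubgroup hg S) (basisVec (.inr i)) := by
  have mem : spTransvection (basisVec (.inl i)) ^ (1 : ℤ) ∈ elementarySubgroup hg S := by
    simpa [level_of_pairIndex_ne (r := .inl i) (hg := hg) (ne_of_mem_of_not_mem hi hS)] using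
      spTransvection_mem_elementarySubgroup (hg := hg) (r := .inl i) hi 1
  have hAB : symFormZ (basisVec (.inl i)) (basisVec (.inr i)) = 1 := by simp
  have hBA : symFormZ (basisVec (.inr i)) (basisVec (.inl i)) = -1 := by simp
  have eq : spTransvection (basisVec (.inl i)) ^ (1 : ℤ) •
      spTransvection (basisVec (.inr i)) ^ (1 : ℤ) • basisVec (.inl i) = basisVec (.inr i) := by
    simp only [spTransvection_zpow_smul, symFormZ_add_left, symFormZ_smul_left, symFormZ_self,
      hAB, hBA]
    module
  rw [← orbit_smul_of_mem (spTransvection_inr_mem_elementarySubgroup hi 1),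
    ← orbit_smul_of_mem mem, eq]

theorem eichler_one_mem_elementarySubgroup {r s : Fin g ⊕ Fin g} (hr : pairIndex r ∈ S)
    (hs : pairIndex s ∈ S) (hrs : pairIndex r ≠ pairIndex s) (hlr : level hg r = 1)
    (hls : level hg s = 1) :
    eichler 1 (basisVec r) (basisVec s) ∈ elementarySubgroup hg S := by
  simpa [hlr, hls] using eichler_mem_elementarySubgroup (hg := hg) hr hs hrs

theorem orbit_basisVec_inl_of_ne {j : Fin g} (hi : i ∈ S) (hj : j ∈ S) (hji : j ≠ i)
    (hS : lastIndex hg ∉ S) :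
    orbit (elementarySubgroup hg S) (basisVec (.inl j)) =
      orbit (elementarySubgroup hg S) (basisVec (.inr i)) := by
  have memB : eichler 1 (basisVec (.inr j)) (basisVec (.inr i)) ∈ elementarySubgroup hg S :=
    eichler_one_mem_elementarySubgroup hj hi hji (level_inr j) (level_inr i)
  have memA : eichler 1 (basisVec (.inl j)) (basisVec (.inl i)) ∈ elementarySubgroup hg S :=
    eichler_one_mem_elementarySubgroup hj hi hji
      (level_of_pairIndex_ne (ne_of_mem_of_not_mem hj hS))
      (level_of_pairIndex_ne (ne_of_mem_of_not_mem hi hS))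
  have orthogonal {r s : Fin g ⊕ Fin g} (hr : pairIndex r = j) (hs : pairIndex s = i) :
      symFormZ (basisVec r) (basisVec s) = 0 := symFormZ_basisVec_basisVec (by rwa [hr, hs])
  have hAA := orthogonal (pairIndex_inl j) (pairIndex_inl i)
  have hAB := orthogonal (pairIndex_inl j) (pairIndex_inr i)
  have hBB := orthogonal (pairIndex_inr j) (pairIndex_inr i)
  have hAjBj : symFormZ (basisVec (.inl j)) (basisVec (.inr j)) = 1 := by simp
  have hBiAi : symFormZ (basisVec (.inr i)) (basisVec (.inl i)) = -1 := by simp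
  have eq : eichler 1 (basisVec (.inl j)) (basisVec (.inl i)) •
      eichler 1 (basisVec (.inr j)) (basisVec (.inr i)) • basisVec (.inl j) =
        basisVec (.inr i) := by
    simp only [eichler_smul _ hBB, eichler_smul _ hAA, symFormZ_add_left, symFormZ_smul_left,
      symFormZ_self, hAA, hAB, hAjBj, hBiAi, symFormZ_eq_zero_symm hAB]
    module
  rw [← orbit_smul_of_mem memB, ← orbit_smul_of_mem memA, eq]

theorem orbit_basisVec_eq (hi : i ∈ S) (hS : lastIndex hg ∉ S) {k : Fin g ⊕ Fin g}
    (hk : pairIndex k ∈ S) :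
    orbit (elementarySubgroup hg S) (basisVec k) =
      orbit (elementarySubgroup hg S) (basisVec (.inr i)) := by
  have inl {j : Fin g} (hj : j ∈ S) : orbit (elementarySubgroup hg S) (basisVec (.inl j)) =
      orbit (elementarySubgroup hg S) (basisVec (.inr i)) := by
    rcases eq_or_ne j i with rfl | hji
    · exact orbit_basisVec_inl hj hS
    · exact orbit_basisVec_inl_of_ne hi hj hji hS
  cases k with
  | inl j => exact inl hk
  | inr j => exact (orbit_basisVec_inl hk hS).symm.trans (inl hk)

theorem eichler_basisVec_inr_mem_elementarySubgroup (hi : i ∈ S) (hS : lastIndex hg ∉ S.erase i)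
    {z : Fin g ⊕ Fin g → ℤ} (hz : z ∈ pairLattice (S.erase i)) :
    eichler 1 (basisVec (.inr i)) z ∈ elementarySubgroup hg S := by
  have orthogonal {z} (hz : z ∈ pairLattice (S.erase i)) : symFormZ (basisVec (.inr i)) z = 0 :=
    symFormZ_eq_zero_symm (symFormZ_basisVec_eq_zero_of_mem_pairLattice hz (by simp))
  have add {x y} (hx : x ∈ pairLattice (S.erase i)) (hy : y ∈ pairLattice (S.erase i)) := by
    simpa using eichler_mul_eichler 1 (orthogonal hx) (orthogonal hy)
  induction hz using AddSubgroup.closure_induction with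
  | mem z hz =>
    obtain ⟨s, hs, rfl⟩ := hz
    obtain ⟨hsi, hsS⟩ := Finset.mem_erase.mp hs
    exact eichler_one_mem_elementarySubgroup hi hsS (Ne.symm hsi) (level_inr i)
      (level_of_pairIndex_ne (ne_of_mem_of_not_mem hs hS))
  | zero => rw [eichler_zero_right]; exact one_mem _
  | add x y hx hy ihx ihy =>
    rw [← Subgroup.mul_mem_cancel_right _ (spTransvection_inr_mem_elementarySubgroup hi _),
      ← add hx hy]
    exact mul_mem ihx ihy
  | neg x hx ih =>
    rw [← Subgroup.mul_mem_cancel_left _ ih, add hx (neg_mem hx), add_neg_cancel,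
      eichler_zero_right, one_mul]
    exact spTransvection_inr_mem_elementarySubgroup hi _

theorem exists_smul_eq_basisVec_inl (hi : i ∈ S) (hS : lastIndex hg ∉ S.erase i)
    {w : Fin g ⊕ Fin g → ℤ} (hw : w ∈ pairLattice S)
    (hwB : symFormZ w (basisVec (.inr i)) = 1) :
    ∃ κ ∈ elementarySubgroup hg S, κ • basisVec (.inr i) = basisVec (.inr i) ∧
      κ • w = basisVec (.inl i) := by
  set z : Fin g ⊕ Fin g → ℤ := basisVec (.inl i) + w (.inr i) • basisVec (.inr i) - w with hz
  have z_mem : z ∈ pairLattice (S.erase i) := by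
    have hwA : w (.inl i) = 1 := (symFormZ_basisVec_inr w i).symm.trans hwB
    refine mem_pairLattice_iff.mpr fun r hr => ?_
    by_cases hri : pairIndex r = i
    · rcases pairIndex_eq_iff.mp hri with rfl | rfl <;> simp [hz, hwA]
    · have hrS : pairIndex r ∉ S := fun h => hr (Finset.mem_erase.mpr ⟨hri, h⟩)
      have ne {t : Fin g ⊕ Fin g} (ht : pairIndex t = i) : r ≠ t := fun h => hri (h ▸ ht)
      simp [hz, basisVec_apply_of_ne (ne (pairIndex_inl i)),
        basisVec_apply_of_ne (ne (pairIndex_inr i)), mem_pairLattice_iff.mp hw r hrS]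
  have hBz : symFormZ (basisVec (.inr i)) z = 0 :=
    symFormZ_eq_zero_symm (symFormZ_basisVec_eq_zero_of_mem_pairLattice z_mem (by simp))
  have hAB : symFormZ (basisVec (.inl i)) (basisVec (.inr i)) = 1 := by simp
  have shear : eichler 1 (basisVec (.inr i)) z • w =
      basisVec (.inl i) + (w (.inr i) + symFormZ w z) • basisVec (.inr i) := by
    rw [eichler_smul _ hBz, hwB, hz]
    module
  refine ⟨spTransvection (basisVec (.inr i)) ^ (-(w (.inr i) + symFormZ w z)) *
      eichler 1 (basisVec (.inr i)) z,
    mul_mem (spTransvection_inr_mem_elementarySubgroup hi _)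
      (eichler_basisVec_inr_mem_elementarySubgroup hi hS z_mem), ?_, ?_⟩
  · simp [mul_smul, eichler_smul _ hBz, spTransvection_zpow_smul, hBz, -symFormZ_basisVec_inr]
  · rw [mul_smul, shear, spTransvection_zpow_smul, symFormZ_add_left, symFormZ_smul_left,
      symFormZ_self, hAB]
    module

theorem exists_smul_basisVec_inr_eq (hi : i ∈ S) (hS : lastIndex hg ∉ S.erase i)
    {s : symplecticGroup (Fin g) ℤ} (hs : s ∈ GammaP2 g hg ⊓ pairFixer S) :
    ∃ κ ∈ elementarySubgroup hg S, κ • s • basisVec (.inr i) = basisVec (.inr i) := by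
  have hB : s • basisVec (.inr i) ∈ pairLattice S :=
    smul_mem_pairLattice hs.2 (basisVec_mem_pairLattice hi)
  have hB0 : s • basisVec (.inr i) ≠ 0 := (smul_ne_zero_iff_ne s).mpr (by simp [basisVec])
  obtain ⟨κ, hκ, k, hk, q, eq⟩ := exists_smul_eq_smul_basisVec hg hB hB0
  have hq : q = 1 ∨ q = -1 := by
    rw [← mul_smul] at eq
    exact eq_one_or_neg_one_of_smul_basisVec_eq eq
  have orbit_k : orbit (elementarySubgroup hg S) (basisVec k) =
      orbit (elementarySubgroup hg S) (basisVec (.inr i)) := by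
    by_cases hlast : lastIndex hg ∈ S
    · obtain rfl : lastIndex hg = i := by_contra fun h => hS (Finset.mem_erase.mpr ⟨h, hlast⟩)
      obtain ⟨x, hx⟩ := mem_gammaP2_iff.mp (mul_mem (elementarySubgroup_le_gammaP2 hκ) hs.1)
      rw [mul_smul, eq] at hx
      suffices k = .inr (lastIndex hg) by rw [this]
      by_contra hkne
      have := congrFun hx (.inr (lastIndex hg))
      simp only [Pi.smul_apply, basisVec_apply_of_ne (Ne.symm hkne), mul_zero, zsmul_eq_mul,
        Int.cast_ofNat, Pi.add_apply, Pi.single_eq_same, Pi.mul_apply,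
        Pi.ofNat_apply] at this
      omega
    · exact orbit_basisVec_eq hi hlast hk
  suffices orbit (elementarySubgroup hg S) (s • basisVec (.inr i)) =
      orbit (elementarySubgroup hg S) (basisVec (.inr i)) by
    obtain ⟨⟨κ', hκ'⟩, h⟩ := orbit_eq_iff.mp this.symm
    exact ⟨κ', hκ', h⟩
  rw [← orbit_smul_of_mem hκ, eq]
  rcases hq with rfl | rfl
  · rw [one_smul, orbit_k]
  · rw [neg_one_smul, orbit_neg_eq_of_orbit_eq orbit_k, orbit_neg_basisVec_inr hi]

theorem exists_mul_mem_pairFixer_erase (hi : i ∈ S) (hS : lastIndex hg ∉ S.erase i)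
    {s : symplecticGroup (Fin g) ℤ} (hs : s ∈ GammaP2 g hg ⊓ pairFixer S) :
    ∃ κ ∈ elementarySubgroup hg S, κ * s ∈ pairFixer (S.erase i) := by
  obtain ⟨κ₁, hκ₁, hB⟩ := exists_smul_basisVec_inr_eq hi hS hs
  have hκ₁s : κ₁ * s ∈ pairFixer S := mul_mem (elementarySubgroup_le_pairFixer hκ₁) hs.2
  obtain ⟨κ₂, hκ₂, hB', hA⟩ := exists_smul_eq_basisVec_inl hi hS
    (w := (κ₁ * s) • basisVec (.inl i))
    (smul_mem_pairLattice hκ₁s (basisVec_mem_pairLattice hi))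
    (by rw [← hB, ← mul_smul, symFormZ_smul_smul]; simp)
  refine ⟨κ₂ * κ₁, mul_mem hκ₂ hκ₁, mem_pairFixer_iff.mpr fun r hr => ?_⟩
  rw [mul_assoc, mul_smul]
  by_cases hrS : pairIndex r ∈ S
  · have hri : pairIndex r = i := by_contra fun h => hr (Finset.mem_erase.mpr ⟨h, hrS⟩)
    rcases pairIndex_eq_iff.mp hri with rfl | rfl
    · exact hA
    · rw [mul_smul, hB, hB']
  · rw [mem_pairFixer_iff.mp hκ₁s r hrS,
      mem_pairFixer_iff.mp (elementarySubgroup_le_pairFixer hκ₂) r hrS]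

theorem gammaP2_inf_pairFixer_le_elementarySubgroup (S : Finset (Fin g)) :
    GammaP2 g hg ⊓ pairFixer S ≤ elementarySubgroup hg S := by
  induction S using Finset.strongInduction with | H S ih => ?_
  rcases S.eq_empty_or_nonempty with rfl | hne
  · rw [pairFixer_empty, inf_bot_eq]
    exact bot_le
  obtain ⟨i, hi, hS⟩ : ∃ i ∈ S, lastIndex hg ∉ S.erase i := by
    by_cases h : lastIndex hg ∈ S
    · exact ⟨_, h, Finset.notMem_erase _ _⟩
    · exact hne.imp fun i hi => ⟨hi, fun h' => h (Finset.mem_of_mem_erase h')⟩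
  intro s hs
  obtain ⟨κ, hκ, hκs⟩ := exists_mul_mem_pairFixer_erase hi hS hs
  have := ih _ (Finset.erase_ssubset hi) ⟨mul_mem (elementarySubgroup_le_gammaP2 hκ) hs.1, hκs⟩
  exact (Subgroup.mul_mem_cancel_left _ hκ).mp
    (elementarySubgroup_mono (Finset.erase_subset i S) this)

theorem gammaP2_le_elementarySubgroup_univ : GammaP2 g hg ≤ elementarySubgroup hg .univ :=
  fun _ hs => gammaP2_inf_pairFixer_le_elementarySubgroup _
    ⟨hs, mem_pairFixer_iff.mpr fun _ hr => absurd (Finset.mem_univ _) hr⟩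

end Generation

/-! ### The abelianization -/

section Abelianization

variable {g : ℕ} {hg : 1 ≤ g}

theorem gammaP2_le_of_commutator_le (hg4 : 4 ≤ g) {H : Subgroup (symplecticGroup (Fin g) ℤ)}
    (hcomm : ⁅GammaP2 g hg, GammaP2 g hg⁆ ≤ H)
    (hT : spTransvection (basisVec (.inl (lastIndex hg))) ^ (2 : ℤ) ∈ H) : GammaP2 g hg ≤ H := by
  refine gammaP2_le_elementarySubgroup_univ.trans
    (elementarySubgroup_le (fun r _ => ?_) fun r s _ _ hrs => ?_)
  · by_cases hr : r = .inl (lastIndex hg)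
    · simpa only [level, hr, if_true] using hT
    · have hlevel : level hg r = 1 := if_neg hr
      have := spTransvection_basisVec_zpow_mem_commutator (k := 1) hg4
        (hlevel ▸ two_dvd_level_mul (hg := hg) (r := r))
      rw [one_pow] at this
      exact hlevel ▸ hcomm this
  · by_cases hs : pairIndex s = lastIndex hg
    · rw [eichler_comm _ (symFormZ_basisVec_basisVec hrs)]
      refine hcomm (eichler_basisVec_mem_commutator hg4 hrs.symm (hs ▸ hrs) ?_)
      rw [mul_assoc]
      exact two_dvd_level_mul.mul_left _
    · refine hcomm (eichler_basisVec_mem_commutator hg4 hrs hs ?_)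
      rw [mul_right_comm]
      exact two_dvd_level_mul.mul_right _

theorem spTransvection_sq_mem_gammaP2 (c : Fin g ⊕ Fin g → ℤ) :
    spTransvection c ^ (2 : ℤ) ∈ GammaP2 g hg :=
  spTransvection_zpow_mem_gammaP2 (dvd_mul_right 2 _)

/-- The square of the transvection `T_c` as an element of `Γ_g(p₂)`. -/
def gammaP2TransvectionSq (hg : 1 ≤ g) (c : Fin g ⊕ Fin g → ℤ) : GammaP2 g hg :=
  ⟨spTransvection c ^ (2 : ℤ), spTransvection_sq_mem_gammaP2 c⟩

theorem zpowers_of_gammaP2TransvectionSq_basisVec (hg4 : 4 ≤ g) :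
    Subgroup.zpowers (Abelianization.of
      (gammaP2TransvectionSq hg (basisVec (.inl (lastIndex hg))))) = ⊤ := by
  set τ := gammaP2TransvectionSq hg (basisVec (.inl (lastIndex hg)))
  let K : Subgroup (GammaP2 g hg) :=
    (Subgroup.zpowers (Abelianization.of τ)).comap Abelianization.of
  have commutator_le : commutator (GammaP2 g hg) ≤ K := by
    rw [← Abelianization.ker_of]
    exact MonoidHom.ker_le_comap _ _
  have le_map : GammaP2 g hg ≤ K.map (GammaP2 g hg).subtype := by
    refine gammaP2_le_of_commutator_le hg4 ?_ ⟨τ, Subgroup.mem_zpowers (Abelianization.of τ), rfl⟩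
    rw [← Subgroup.map_subtype_commutator]
    exact Subgroup.map_mono commutator_le
  refine (Subgroup.eq_top_iff' _).mpr fun a => ?_
  obtain ⟨t, rfl⟩ := QuotientGroup.mk_surjective a
  exact (Subgroup.mem_map_iff_mem (Subgroup.subtype_injective _)).mp (le_map t.2)

theorem symFormZ_mul_smul_modEq {s t : symplecticGroup (Fin g) ℤ} (hs : s ∈ GammaP2 g hg)
    (ht : t ∈ GammaP2 g hg) :
    symFormZ ((s * t) • basisVec (.inr (lastIndex hg))) (basisVec (.inr (lastIndex hg))) ≡
      symFormZ (s • basisVec (.inr (lastIndex hg))) (basisVec (.inr (lastIndex hg))) +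
        symFormZ (t • basisVec (.inr (lastIndex hg))) (basisVec (.inr (lastIndex hg)))
      [ZMOD 4] := by
  obtain ⟨x, hx⟩ := mem_gammaP2_iff.mp ht
  obtain ⟨y, hy⟩ := mem_gammaP2_iff.mp (inv_mem hs)
  set B := basisVec (.inr (lastIndex hg))
  have adjoint (z) : symFormZ (s • z) B = symFormZ z (s⁻¹ • B) := by
    rw [← symFormZ_smul_smul s z, smul_inv_smul]
  refine Int.modEq_iff_dvd.mpr ⟨-symFormZ x y, ?_⟩
  rw [mul_smul, adjoint, adjoint, hx, hy]
  simp only [symFormZ_add_left, symFormZ_add_right, symFormZ_smul_left, symFormZ_smul_right,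
    symFormZ_self]
  ring

/-- The homomorphism `s ↦ ⟨s B_g, B_g⟩ mod 4`, which detects the abelianization of `Γ_g(p₂)`. -/
def pairingHom (hg : 1 ≤ g) : GammaP2 g hg →* Multiplicative (ZMod 4) :=
  MonoidHom.mk' (fun s => .ofAdd (symFormZ (s.1 • basisVec (.inr (lastIndex hg)))
      (basisVec (.inr (lastIndex hg))) : ZMod 4)) fun s t => by
    rw [← ofAdd_add, ← Int.cast_add]
    exact congrArg _ ((ZMod.intCast_eq_intCast_iff _ _ 4).mpr (symFormZ_mul_smul_modEq s.2 t.2))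

theorem gammaP2TransvectionSq_notMem_commutator {c : Fin g ⊕ Fin g → ℤ}
    (hc : Odd (c (.inl (lastIndex hg)))) :
    gammaP2TransvectionSq hg c ∉ commutator (GammaP2 g hg) := by
  intro h
  have ker : pairingHom hg (gammaP2TransvectionSq hg c) = 1 :=
    Abelianization.commutator_subset_ker _ h
  have pairing : symFormZ (spTransvection c ^ (2 : ℤ) • basisVec (.inr (lastIndex hg)))
      (basisVec (.inr (lastIndex hg))) = -2 * c (.inl (lastIndex hg)) ^ 2 := by
    rw [spTransvection_zpow_smul, symFormZ_add_left, symFormZ_smul_left, symFormZ_self,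
      symFormZ_anticomm _ c, symFormZ_basisVec_inr]
    ring
  have dvd : (4 : ℤ) ∣ -2 * c (.inl (lastIndex hg)) ^ 2 := by
    rw [← pairing]
    exact (ZMod.intCast_zmod_eq_zero_iff_dvd _ 4).mp ker
  obtain ⟨m, hm⟩ := hc.pow (n := 2)
  omega

theorem natCard_abelianization_gammaP2 (hg4 : 4 ≤ g) :
    Nat.card (Abelianization (GammaP2 g hg)) = 2 := by
  set τ := gammaP2TransvectionSq hg (basisVec (.inl (lastIndex hg)))
  rw [← orderOf_eq_card_of_zpowers_eq_top (zpowers_of_gammaP2TransvectionSq_basisVec hg4)]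
  refine orderOf_eq_prime ?_ ?_
  · rw [← map_pow, ← MonoidHom.mem_ker, Abelianization.ker_of,
      ← Subgroup.mem_map_iff_mem (Subgroup.subtype_injective _), Subgroup.map_subtype_commutator]
    have mem := spTransvection_basisVec_zpow_mem_commutator (k := 2) hg4
      (dvd_mul_right 2 (basisVec (.inl (lastIndex hg)) (.inl (lastIndex hg))))
    rw [sq, _root_.zpow_mul, _root_.zpow_ofNat _ 2, _root_.zpow_ofNat _ 2] at mem
    rw [Subgroup.subtype_apply, Subgroup.coe_pow]
    exact mem
  · rw [Ne, ← MonoidHom.mem_ker, Abelianization.ker_of]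
    exact gammaP2TransvectionSq_notMem_commutator (by simp)

end Abelianization

/-- for `g ≥ 4` and `c ∈ ℤ^{2g}` whose `g`-th coordinate is odd
(equivalently, whose symplectic pairing with `B_g = e_{2g}` is odd), the square `T_c²`
of the symplectic transvection along `c` lies in `Γ_g(p₂)`, and its image in the
abelianization of `Γ_g(p₂)` is a generator; in particular `T_c²` is not in the
commutator subgroup. -/
theorem stmt18 (g : ℕ) (hg1 : 1 ≤ g) (hg : 4 ≤ g) (c : Fin g ⊕ Fin g → ℤ)
    (hc : Odd (c (Sum.inl (⟨g - 1, by omega⟩ : Fin g)))) :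
    ∃ t : GammaP2 g hg1,
      (t.1 : Matrix (Fin g ⊕ Fin g) (Fin g ⊕ Fin g) ℤ) = symTransvection c ^ 2 ∧
      Subgroup.zpowers (Abelianization.of t) = (⊤ : Subgroup (Abelianization ↥(GammaP2 g hg1))) ∧
      t ∉ commutator ↥(GammaP2 g hg1) := by
  have : Fact (Nat.Prime 2) := ⟨Nat.prime_two⟩
  have notMem : gammaP2TransvectionSq hg1 c ∉ commutator (GammaP2 g hg1) :=
    gammaP2TransvectionSq_notMem_commutator hc
  have of_ne_one : Abelianization.of (gammaP2TransvectionSq hg1 c) ≠ 1 := by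
    rwa [Ne, ← MonoidHom.mem_ker, Abelianization.ker_of]
  exact ⟨gammaP2TransvectionSq hg1 c, rfl,
    zpowers_eq_top_of_prime_card (natCard_abelianization_gammaP2 hg) of_ne_one, notMem⟩
end
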